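/- arXiv:2603.16535 — 2 statements merged into one kernel-verified Lean document; each statement's English description precedes it below -/
import Mathlib

section
/- Let d, N ≥ 1, let A be a symmetric d×d real matrix, let V be a d×d real matrix, and let α : ℝ → ℝ. Let W : ℝ × ℝ^d → ℝ^d be continuously differentiable, with spatial Jacobian J(t, x) (the derivative of W(t, ·) at x), and let X₁, …, X_N : ℝ → ℝ^d be differentiable curves satisfying X_i'(t) = (1/N) Σ_{j=1}^N ⟨X_j(t), A X_i(t)⟩ W(t, X_j(t)) for all i and t. Suppose that for all t ∈ ℝ and x ∈ ℝ^d: ∂_t W(t, x) = −α(t) W(t, x) − (1/N) Σ_{j=1}^N [ ⟨W(t, x), W(t, X_j(t))⟩ A X_j(t) + ⟨x, A X_j(t)⟩ J(t, x) W(t, X_j(t)) ] + V x. Then the curves Y_i(t) := W(t, X_i(t)) are differentiable and satisfy Y_i'(t) = −α(t) Y_i(t) − (1/N) Σ_{j=1}^N ⟨Y_i(t), Y_j(t)⟩ A X_j(t) + V X_i(t) for all i and t. -/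
open MeasureTheory Real Matrix
open scoped RealInnerProductSpace

noncomputable section

/-- Matrix–vector multiplication on Euclidean space. -/
def mv {d : ℕ} (A : Matrix (Fin d) (Fin d) ℝ) (x : EuclideanSpace ℝ (Fin d)) :
    EuclideanSpace ℝ (Fin d) := Matrix.toEuclideanLin A x

theorem mv_symm {d : ℕ} (A : Matrix (Fin d) (Fin d) ℝ) (hA : A.IsSymm)
    (x y : EuclideanSpace ℝ (Fin d)) : (⟪x, mv A y⟫ : ℝ) = ⟪y, mv A x⟫ := by
  have hH : A.IsHermitian := by
    rw [Matrix.IsHermitian, Matrix.conjTranspose_eq_transpose_of_trivial]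
    exact hA
  have h := (Matrix.isSymmetric_toEuclideanLin_iff.2 hH) x y
  unfold mv
  rw [← h, real_inner_comm]

/-- Proposition 4.3: the deterministic inertial interacting particle system associated
to the accelerated linear attention PDE. The curves `Y_i(t) = W(t, X_i(t))` satisfy
`Y_i' = −α Y_i − (1/N) Σ_j ⟨Y_i, Y_j⟩ A X_j + V X_i`, the Jacobian terms cancelling
by the chain rule. -/
theorem stmt12 {d N : ℕ} (hd : 1 ≤ d) (hN : 1 ≤ N)
    (A : Matrix (Fin d) (Fin d) ℝ) (hA : A.IsSymm)
    (V : Matrix (Fin d) (Fin d) ℝ) (α : ℝ → ℝ)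
    (W : ℝ × EuclideanSpace ℝ (Fin d) → EuclideanSpace ℝ (Fin d))
    (hW : ContDiff ℝ 1 W)
    (X : Fin N → ℝ → EuclideanSpace ℝ (Fin d))
    (hX : ∀ (i : Fin N) (t : ℝ), HasDerivAt (X i)
      ((N : ℝ)⁻¹ • ∑ j : Fin N, (⟪X j t, mv A (X i t)⟫ : ℝ) • W (t, X j t)) t)
    (hdtW : ∀ (t : ℝ) (x : EuclideanSpace ℝ (Fin d)),
      HasDerivAt (fun s => W (s, x))
        (-(α t) • W (t, x)
          - (N : ℝ)⁻¹ • ∑ j : Fin N,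
              ((⟪W (t, x), W (t, X j t)⟫ : ℝ) • mv A (X j t)
                + (⟪x, mv A (X j t)⟫ : ℝ) •
                    (fderiv ℝ (fun y => W (t, y)) x) (W (t, X j t)))
          + mv V x) t) :
    ∀ (i : Fin N) (t : ℝ),
      HasDerivAt (fun s => W (s, X i s))
        (-(α t) • W (t, X i t)
          - (N : ℝ)⁻¹ • ∑ j : Fin N, (⟪W (t, X i t), W (t, X j t)⟫ : ℝ) • mv A (X j t)
          + mv V (X i t)) t := by
  intro i t
  have hF : HasFDerivAt W (fderiv ℝ W (t, X i t)) (t, X i t) :=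
    ((hW.differentiable (by norm_num)) (t, X i t)).hasFDerivAt
  have h1 : HasDerivAt (fun s => W (s, X i s)) _ t :=
    HasFDerivAt.comp_hasDerivAt t hF ((hasDerivAt_id t).prodMk (hX i t))
  have h2 : HasDerivAt (fun s => W (s, X i t)) _ t :=
    HasFDerivAt.comp_hasDerivAt (f := fun s => (s, X i t)) t hF
      ((hasDerivAt_id t).prodMk (hasDerivAt_const t (X i t)))
  have h3 : HasFDerivAt (fun y => W (t, y)) _ (X i t) :=
    HasFDerivAt.comp (f := fun y => (t, y)) (X i t) hF
      ((hasFDerivAt_const t (X i t)).prodMk (hasFDerivAt_id (X i t)))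
  have h4 := h2.unique (hdtW t (X i t))
  have hJ : ∀ v, fderiv ℝ (fun y => W (t, y)) (X i t) v
      = fderiv ℝ W (t, X i t) (0, v) := by
    intro v
    rw [h3.fderiv]
    simp
  refine h1.congr_deriv ?_
  have hs : ∀ v : EuclideanSpace ℝ (Fin d), ((1 : ℝ), v) = (1, 0) + (0, v) := by
    intro v
    simp
  rw [hs, map_add, h4, ← hJ, map_smul, map_sum, Finset.sum_add_distrib, smul_add]
  simp only [map_smul]
  have hsum : ∑ j : Fin N, (⟪X j t, mv A (X i t)⟫ : ℝ) •
        (fderiv ℝ (fun y => W (t, y)) (X i t)) (W (t, X j t))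
      = ∑ j : Fin N, (⟪X i t, mv A (X j t)⟫ : ℝ) •
        (fderiv ℝ (fun y => W (t, y)) (X i t)) (W (t, X j t)) :=
    Finset.sum_congr rfl fun j _ => by rw [mv_symm A hA]
  rw [hsum]
  abel

end
end

section
/- Let d, N ≥ 1, let A and B be d×d real matrices with A symmetric, and let α : ℝ → ℝ. Let W : ℝ × ℝ^d → ℝ^d be continuously differentiable, with spatial Jacobian J(t, x), and let X₁, …, X_N : ℝ → ℝ^d be differentiable curves. Define S(t, x) = Σ_{j=1}^N exp(⟨X_j(t), A x⟩), M_{ij}(t) = exp(⟨X_i(t), A X_j(t)⟩), D_i(t) = Σ_{k=1}^N M_{ik}(t), and ‖v‖²_B = ⟨v, B v⟩. Suppose X_i'(t) = N B W(t, X_i(t)) / D_i(t) for all i and t, and that for all t ∈ ℝ and x ∈ ℝ^d: ∂_t W(t, x) = −α(t) W(t, x) − J(t, x) ( N B W(t, x) / S(t, x) ) + (N / (2 S(t, x)²)) ‖W(t, x)‖²_B Σ_{j=1}^N exp(⟨X_j(t), A x⟩) A X_j(t) + (N/2) Σ_{j=1}^N exp(⟨X_j(t), A x⟩) ( ‖W(t,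 X_j(t))‖²_B / D_j(t)² + 2 ) A X_j(t). Then the curves Y_i(t) := W(t, X_i(t)) are differentiable and satisfy Y_i'(t) = −α(t) Y_i(t) + (N/2) Σ_{j=1}^N M_{ij}(t) ( ‖Y_i(t)‖²_B / D_i(t)² + ‖Y_j(t)‖²_B / D_j(t)² + 2 ) A X_j(t) for all i and t. -/
open MeasureTheory Real Matrix
open scoped RealInnerProductSpace

noncomputable section

/-- `S(t, x) = Σ_j exp(⟨X_j(t), A x⟩)`. -/
def Sfun {d N : ℕ} (A : Matrix (Fin d) (Fin d) ℝ)
    (X : Fin N → ℝ → EuclideanSpace ℝ (Fin d)) (t : ℝ)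
    (x : EuclideanSpace ℝ (Fin d)) : ℝ :=
  ∑ j : Fin N, Real.exp ⟪X j t, mv A x⟫

/-- `M_{ij}(t) = exp(⟨X_i(t), A X_j(t)⟩)`. -/
def Mfun {d N : ℕ} (A : Matrix (Fin d) (Fin d) ℝ)
    (X : Fin N → ℝ → EuclideanSpace ℝ (Fin d)) (i j : Fin N) (t : ℝ) : ℝ :=
  Real.exp ⟪X i t, mv A (X j t)⟫

/-- `D_i(t) = Σ_k M_{ik}(t)`. -/
def Dfun {d N : ℕ} (A : Matrix (Fin d) (Fin d) ℝ)
    (X : Fin N → ℝ → EuclideanSpace ℝ (Fin d)) (i : Fin N) (t : ℝ) : ℝ :=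
  ∑ k : Fin N, Mfun A X i k t

/-- `‖v‖²_B = ⟨v, B v⟩`. -/
def nB {d : ℕ} (B : Matrix (Fin d) (Fin d) ℝ) (v : EuclideanSpace ℝ (Fin d)) : ℝ :=
  ⟪v, mv B v⟫

/-- Proposition 6.2: the deterministic inertial interacting particle system associated
to the accelerated softmax attention PDE. The curves `Y_i(t) = W(t, X_i(t))` satisfy
`Y_i' = −α Y_i + (N/2) Σ_j M_{ij} (‖Y_i‖²_B/D_i² + ‖Y_j‖²_B/D_j² + 2) A X_j`,
the Jacobian terms cancelling by the chain rule since `X_i' = N B Y_i / D_i`. -/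
theorem stmt13 {d N : ℕ} (hd : 1 ≤ d) (hN : 1 ≤ N)
    (A : Matrix (Fin d) (Fin d) ℝ) (hA : A.IsSymm)
    (B : Matrix (Fin d) (Fin d) ℝ) (α : ℝ → ℝ)
    (W : ℝ × EuclideanSpace ℝ (Fin d) → EuclideanSpace ℝ (Fin d))
    (hW : ContDiff ℝ 1 W)
    (X : Fin N → ℝ → EuclideanSpace ℝ (Fin d))
    (hX : ∀ (i : Fin N) (t : ℝ), HasDerivAt (X i)
      (((N : ℝ) / Dfun A X i t) • mv B (W (t, X i t))) t)
    (hdtW : ∀ (t : ℝ) (x : EuclideanSpace ℝ (Fin d)),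
      HasDerivAt (fun s => W (s, x))
        (-(α t) • W (t, x)
          - (fderiv ℝ (fun y => W (t, y)) x)
              (((N : ℝ) / Sfun A X t x) • mv B (W (t, x)))
          + ((N : ℝ) / (2 * (Sfun A X t x) ^ 2) * nB B (W (t, x))) •
              ∑ j : Fin N, Real.exp ⟪X j t, mv A x⟫ • mv A (X j t)
          + ((N : ℝ) / 2) •
              ∑ j : Fin N, (Real.exp ⟪X j t, mv A x⟫ *
                (nB B (W (t, X j t)) / (Dfun A X j t) ^ 2 + 2)) • mv A (X j t)) t) :
    ∀ (i : Fin N) (t : ℝ),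
      HasDerivAt (fun s => W (s, X i s))
        (-(α t) • W (t, X i t)
          + ((N : ℝ) / 2) •
              ∑ j : Fin N, (Mfun A X i j t *
                (nB B (W (t, X i t)) / (Dfun A X i t) ^ 2 +
                  nB B (W (t, X j t)) / (Dfun A X j t) ^ 2 + 2)) • mv A (X j t)) t := by
  have hsymm : ∀ x y : EuclideanSpace ℝ (Fin d), ⟪x, mv A y⟫ = ⟪y, mv A x⟫ := by
    intro x y
    have h : (Matrix.toEuclideanLin A).IsSymmetric := by
      rw [Matrix.isSymmetric_toEuclideanLin_iff]
      rw [Matrix.IsHermitian, Matrix.conjTranspose_eq_transpose_of_trivial]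
      exact hA
    unfold mv
    rw [← h x y, real_inner_comm]
  intro i t
  have hM : ∀ j, Real.exp ⟪X j t, mv A (X i t)⟫ = Mfun A X i j t := by
    intro j
    rw [hsymm]
    rfl
  have hS : Sfun A X t (X i t) = Dfun A X i t := by
    unfold Sfun Dfun
    exact Finset.sum_congr rfl fun j _ => hM j
  have hF := ((hW.differentiable one_ne_zero) (t, X i t)).hasFDerivAt
  have h1 := hdtW t (X i t)
  simp only [hM, hS] at h1
  have h2 : HasDerivAt (fun s => W (s, X i t)) (fderiv ℝ W (t, X i t) (1, 0)) t :=
    hF.comp_hasDerivAt (f := fun s : ℝ => (s, X i t)) t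
      ((hasDerivAt_id t).prodMk (hasDerivAt_const t (X i t)))
  have h3 : HasFDerivAt (fun y => W (t, y))
      ((fderiv ℝ W (t, X i t)).comp (ContinuousLinearMap.inr ℝ ℝ _)) (X i t) :=
    hF.comp (f := fun y => (t, y)) (X i t) (hasFDerivAt_prodMk_right t (X i t))
  have h4 : HasDerivAt (fun s => W (s, X i s)) (fderiv ℝ W (t, X i t)
      (1, ((N : ℝ) / Dfun A X i t) • mv B (W (t, X i t)))) t :=
    hF.comp_hasDerivAt (f := fun s : ℝ => (s, X i s)) t ((hasDerivAt_id t).prodMk (hX i t))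
  have h5 := h2.unique h1
  rw [h3.fderiv] at h5
  convert h4 using 1
  have h6 : ∀ v : EuclideanSpace ℝ (Fin d), ((1 : ℝ), v) = (1, 0) + (0, v) := by
    intro v; simp
  rw [h6, map_add, h5]
  simp only [ContinuousLinearMap.comp_apply, ContinuousLinearMap.inr_apply]
  have h7 : ∀ a b c e : EuclideanSpace ℝ (Fin d), a - b + c + e + b = a + (c + e) := by
    intros; abel
  rw [h7, Finset.smul_sum, Finset.smul_sum, Finset.smul_sum, ← Finset.sum_add_distrib]
  congr 1
  refine Finset.sum_congr rfl fun j _ => ?_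
  rw [smul_smul, smul_smul, smul_smul, ← add_smul]
  congr 1
  rw [div_mul_eq_div_div]
  ring

end
end
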